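/- arXiv:2108.12312 — 2 statements merged into one kernel-verified Lean document; each statement's English description precedes it below -/
import Mathlib

section
/- Let p, q ∈ R be idempotents such that p - q and (1-p) - q are both group invertible. Then p*q - q*p is group invertible and (p*q - q*p)^# = -q1^# * (p-q1)^# * q2 + q3 * q1^# * (p-q1)^#. -/
/-!
Put `a = p - q` and `b = 1 - p - q`. Then `p * q - q * p = b * a = -(a * b)`, and `a ^ 2`, `b ^ 2`
commute with `p` and `q`, with `p * b ^ 2 = q1` and `p * a ^ 2 = p - q1`. Group inverses inherit
intertwining relations (`IsGroupInvOf.intertwine`), so with `A = a^#` and `B = b^#` the elements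
`a, A` anticommute with `b, B`, and `A ^ 2`, `B ^ 2` commute with `p` and `q`. Hence
`(b * a)^# = A * B`, `q1^# = p * B ^ 2` and `(p - q1)^# = p * A ^ 2`. The claimed expression is then
`B ^ 2 * A ^ 2 * (q * p - p * q) = B ^ 2 * A ^ 2 * a * b = A * B`.
-/

variable {R : Type*} [Ring R]

/-- `c` is a group inverse of `a`. -/
def IsGroupInvOf (a c : R) : Prop := a * c * a = a ∧ c * a * c = c ∧ a * c = c * a

/-- `a` is group invertible. -/
def GroupInvertible (a : R) : Prop := ∃ c, IsGroupInvOf a c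

/-- The group inverse `a^#` (junk value `0` if it does not exist). -/
noncomputable def gi (a : R) : R :=
  haveI := Classical.dec (GroupInvertible a)
  if h : GroupInvertible a then h.choose else 0

/-- The spectral idempotent `a^π = 1 - a * a^#`. -/
noncomputable def sp (a : R) : R := 1 - a * gi a

/-- Group inverses inherit intertwining relations; both sides equal `M * m * x * N`. -/
lemma IsGroupInvOf.intertwine {m M n N x : R} (hm : IsGroupInvOf m M) (hn : IsGroupInvOf n N)
    (h : m * x = x * n) : M * x = x * N := by
  obtain ⟨m1, m2, m3⟩ := hm
  obtain ⟨n1, n2, n3⟩ := hn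
  have e1 : M * x = M * m * x * N := by
    calc M * x = M * M * (m * x) := by
          rw [← mul_assoc, mul_assoc M M m, ← m3, ← mul_assoc, m2]
      _ = M * M * (x * n) * (n * N) := by
          rw [h, n3, mul_assoc (M * M), mul_assoc x, ← mul_assoc n N n, n1]
      _ = M * (M * m) * (x * n) * N := by
          have hx : x * (n * (n * N)) = m * (x * (n * N)) := by
            rw [← mul_assoc x n, ← h, mul_assoc]
          simp only [mul_assoc, hx]
      _ = M * m * x * N := by
          rw [← h, ← m3, ← mul_assoc M m M, m2, m3, ← mul_assoc M m x]
  have e2 : x * N = M * m * x * N := by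
    calc x * N = (x * n) * N * N := by
          rw [mul_assoc x n N, n3, mul_assoc x, n2]
      _ = (M * m) * (m * x) * N * N := by
          rw [← h, ← mul_assoc (M * m), ← m3, m1]
      _ = M * m * x * N := by
          rw [h, ← mul_assoc (M * m), mul_assoc (M * m * x) n N, n3, mul_assoc (M * m * x), n2]
  rw [e1, ← e2]

lemma IsGroupInvOf.gi_eq {a c : R} (h : IsGroupInvOf a c) : gi a = c := by
  have hg : GroupInvertible a := ⟨c, h⟩
  have hs : gi a = hg.choose := by unfold gi; rw [dif_pos hg]
  have := hg.choose_spec.intertwine h (x := 1) (by simp)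
  rw [hs]; simpa using this

lemma IsGroupInvOf.neg {a c : R} (h : IsGroupInvOf a c) : IsGroupInvOf (-a) (-c) := by
  obtain ⟨h1, h2, h3⟩ := h
  exact ⟨by simp [h1], by simp [h2], by simp [h3]⟩

/-- Reverse order law, given that `a * A` commutes with `b` and `B`, and `b * B` with `A`. -/
lemma IsGroupInvOf.mul {a A b B : R} (ha : IsGroupInvOf a A) (hb : IsGroupInvOf b B)
    (h1 : a * A * b = b * (a * A)) (h2 : a * A * B = B * (a * A))
    (h3 : b * B * A = A * (b * B)) :
    IsGroupInvOf (b * a) (A * B) := by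
  obtain ⟨a1, a2, a3⟩ := ha
  obtain ⟨b1, b2, b3⟩ := hb
  have e : b * a * (A * B) = b * B * (a * A) := by
    rw [mul_assoc b B, ← h2]; simp only [mul_assoc]
  have e' : A * B * (b * a) = b * B * (a * A) := by
    rw [a3, ← mul_assoc (b * B), h3, b3]; simp only [mul_assoc]
  refine ⟨?_, ?_, e.trans e'.symm⟩
  · rw [e, mul_assoc (b * B), ← mul_assoc (a * A), h1, mul_assoc b (a * A), a1, ← mul_assoc, b1]
  · rw [e', mul_assoc (b * B), ← mul_assoc (a * A), a3, a2, ← mul_assoc, h3, b3, mul_assoc A, b2]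

/-- A commuting idempotent can be absorbed: `(p * m)^# = p * m^#`. -/
lemma IsGroupInvOf.idem_mul {p m M : R} (hp : p * p = p) (h : IsGroupInvOf m M)
    (hm : m * p = p * m) : IsGroupInvOf (p * m) (p * M) := by
  have hM : M * p = p * M := h.intertwine h hm
  obtain ⟨m1, m2, m3⟩ := h
  have e : ∀ u v : R, u * p = p * u → p * u * (p * v) = p * (u * v) := by
    intro u v hu
    rw [mul_assoc, ← mul_assoc u, hu, mul_assoc p u, ← mul_assoc, hp]
  refine ⟨?_, ?_, ?_⟩
  · rw [e _ _ hm, e _ _ (by rw [mul_assoc, hM, ← mul_assoc, hm, mul_assoc]), m1]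
  · rw [e _ _ hM, e _ _ (by rw [mul_assoc, hm, ← mul_assoc, hM, mul_assoc]), m2]
  · rw [e _ _ hm, e _ _ hM, m3]

lemma IsGroupInvOf.sq {m M : R} (h : IsGroupInvOf m M) : IsGroupInvOf (m * m) (M * M) := by
  have c : m * M = M * m := h.2.2
  refine h.mul h ?_ ?_ ?_ <;> simp only [c, mul_assoc] <;> simp only [← mul_assoc, c]

theorem group_inv_commutator (p q q1 q2 q3 q4 : R) (hp : p * p = p) (hq : q * q = q)
    (h1 : q1 = p * q * p) (h2 : q2 = p * q * (1 - p))
    (h3 : q3 = (1 - p) * q * p) (h4 : q4 = (1 - p) * q * (1 - p))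
    (hpq : GroupInvertible (p - q)) (hpbq : GroupInvertible ((1 - p) - q)) :
    GroupInvertible (p * q - q * p) ∧
      gi (p * q - q * p) =
        -(gi q1 * gi (p - q1) * q2) + q3 * gi q1 * gi (p - q1) := by
  obtain ⟨A, hA⟩ := hpq
  obtain ⟨B, hB⟩ := hpbq
  have haa : (p - q) * (p - q) = p - p * q - q * p + q := by
    simp only [mul_sub, sub_mul, hp, hq]; abel
  have hbb : (1 - p - q) * (1 - p - q) = 1 - (p - p * q - q * p + q) := by
    simp only [mul_sub, sub_mul, hp, hq, mul_one, one_mul]; abel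
  have hba : (1 - p - q) * (p - q) = p * q - q * p := by
    simp only [mul_sub, sub_mul, hp, hq, one_mul]; abel
  have hab : (p - q) * (1 - p - q) = q * p - p * q := by
    simp only [mul_sub, sub_mul, hp, hq, mul_one]; abel
  have hpp : ∀ x : R, p * (p * x) = p * x := fun x => by rw [← mul_assoc, hp]
  have hqq : ∀ x : R, q * (q * x) = q * x := fun x => by rw [← mul_assoc, hq]
  have cap : (p - q) * (p - q) * p = p * ((p - q) * (p - q)) := by
    rw [haa]; simp only [mul_sub, sub_mul, mul_add, add_mul, mul_assoc, hp, hpp]; abel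
  have caq : (p - q) * (p - q) * q = q * ((p - q) * (p - q)) := by
    rw [haa]; simp only [mul_sub, sub_mul, mul_add, add_mul, mul_assoc, hq, hqq]; abel
  have cbp : (1 - p - q) * (1 - p - q) * p = p * ((1 - p - q) * (1 - p - q)) := by
    rw [hbb, sub_mul, mul_sub, ← haa, cap, one_mul, mul_one]
  have cbq : (1 - p - q) * (1 - p - q) * q = q * ((1 - p - q) * (1 - p - q)) := by
    rw [hbb, sub_mul, mul_sub, ← haa, caq, one_mul, mul_one]
  have g1 : IsGroupInvOf q1 (p * (B * B)) := by
    have := hB.sq.idem_mul hp cbp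
    convert this using 1
    rw [hbb, h1]; simp only [mul_sub, mul_add, mul_one, hp, hpp, mul_assoc]; abel
  have g2 : IsGroupInvOf (p - q1) (p * (A * A)) := by
    have := hA.sq.idem_mul hp cap
    convert this using 1
    rw [haa, h1]; simp only [mul_sub, mul_add, hp, hpp, mul_assoc]; abel
  have cAp := hA.sq.intertwine hA.sq cap
  have cAq := hA.sq.intertwine hA.sq caq
  have cBp := hB.sq.intertwine hB.sq cbp
  have cBq := hB.sq.intertwine hB.sq cbq
  generalize hga : p - q = a at *
  generalize hgb : 1 - p - q = b at *
  have anti : a * b = b * (-a) := by rw [mul_neg, hab, hba]; abel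
  have anti' : b * a = a * (-b) := by rw [mul_neg, hab, hba]; abel
  have Ab : A * b = b * (-A) := hA.intertwine hA.neg anti
  have Ba : B * a = a * (-B) := hB.intertwine hB.neg anti'
  have bA : b * A = A * (-b) := by rw [mul_neg, Ab]; simp
  have aB : a * B = B * (-a) := by rw [mul_neg, Ba]; simp
  have BA : B * A = A * (-B) := hB.intertwine hB.neg bA
  have AB : A * B = B * (-A) := by rw [mul_neg, BA]; simp
  have g : IsGroupInvOf (p * q - q * p) (A * B) := by
    rw [← hba]
    refine hA.mul hB ?_ ?_ ?_
    · rw [mul_assoc, Ab, ← mul_assoc, anti, mul_assoc]; simp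
    · rw [mul_assoc, AB, ← mul_assoc, aB, mul_assoc]; simp
    · rw [mul_assoc, BA, ← mul_assoc, bA, mul_assoc]; simp
  refine ⟨⟨_, g⟩, ?_⟩
  rw [g.gi_eq, g1.gi_eq, g2.gi_eq, h2, h3]
  set u := B * B * (A * A) with hu
  have up : u * p = p * u := by rw [hu, mul_assoc, cAp, ← mul_assoc, cBp, mul_assoc]
  have uq : u * q = q * u := by rw [hu, mul_assoc, cAq, ← mul_assoc, cBq, mul_assoc]
  have pu : p * (B * B) * (p * (A * A)) = p * u := by
    rw [mul_assoc, ← mul_assoc (B * B), cBp, mul_assoc p, hpp]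
  have e1 : -(p * (B * B) * (p * (A * A)) * (p * q * (1 - p)))
      + (1 - p) * q * p * (p * (B * B)) * (p * (A * A)) = u * (q * p - p * q) := by
    rw [mul_assoc ((1 - p) * q * p), pu, ← up]
    have : (1 - p) * q * p * (u * p) = u * ((1 - p) * q * p) := by
      have hc : Commute u ((1 - p) * q * p) :=
        (((Commute.one_right u).sub_right up).mul_right uq).mul_right up
      rw [← mul_assoc, ← hc.eq]; simp only [mul_assoc, hp]
    rw [this]
    simp only [mul_sub, sub_mul, mul_assoc, hpp, one_mul, mul_one]; abel
  rw [e1, ← hab, hu]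
  have r1 : A * A * a = A := by rw [mul_assoc, ← hA.2.2, ← mul_assoc, hA.2.1]
  have r2 : B * B * b = B := by rw [mul_assoc, ← hB.2.2, ← mul_assoc, hB.2.1]
  calc A * B = B * (-A) := AB
    _ = B * B * b * (-A) := by rw [r2]
    _ = B * B * (A * b) := by rw [Ab]; simp only [mul_assoc]
    _ = B * B * (A * A * a * b) := by rw [r1]
    _ = B * B * (A * A) * (a * b) := by simp only [mul_assoc]
end

section
/- Let p, q ∈ R be idempotents such that p - q is group invertible. Then f*p = p*g = p*h = h*p, and q*h*q = q*h = h*q = h*q*h. -/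
/-!
Put `a = p - q` and `c = a^#`. The element `a ^ 2` commutes with `p` and with `q`, so its group
inverse `c ^ 2` does too (`IsGroupInvOf.commute`); hence so does `h = c ^ 2 * a ^ 2`. Moreover
`p * a * q = 0`, and since `c = a * c ^ 2` with `c ^ 2` commuting with `q`, also
`p * c * q = 0`, which turns `p * h = p * c * (p - q)` into `p * c * p = p * g`.
-/

variable {R : Type*} [Ring R]

lemma isGroupInvOf_gi {a : R} (h : GroupInvertible a) : IsGroupInvOf a (gi a) := by
  unfold gi
  rw [dif_pos h]
  exact h.choose_spec

/-- A group inverse lies in the double commutant. -/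
lemma IsGroupInvOf.commute {b d x : R} (h : IsGroupInvOf b d) (hx : Commute x b) :
    Commute x d := by
  obtain ⟨h1, h2, h3⟩ := h
  have hx : x * b = b * x := hx
  -- Both products equal `(b * d) * x * (b * d)`.
  have e : d * b * x = x * (b * d) := by
    calc d * b * x = d * (x * b) := by rw [hx, mul_assoc]
      _ = d * (x * (b * d * b)) := by rw [h1]
      _ = d * (x * b) * (d * b) := by simp only [mul_assoc]
      _ = d * b * (x * (b * d)) := by rw [hx, h3]; simp only [mul_assoc]
      _ = b * d * ((x * b) * d) := by rw [← h3]; simp only [mul_assoc]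
      _ = (b * d * b) * x * d := by rw [hx]; simp only [mul_assoc]
      _ = x * (b * d) := by rw [h1, ← hx, mul_assoc]
  calc x * d = x * (b * d) * d := by
        conv_lhs => rw [← h2, ← h3]
        simp only [mul_assoc]
    _ = d * (b * x) * d := by rw [← e]; simp only [mul_assoc]
    _ = d * (x * (b * d)) := by rw [← hx]; simp only [mul_assoc]
    _ = (d * d * b) * x := by rw [← e]; simp only [mul_assoc]
    _ = d * x := by rw [mul_assoc d d b, ← h3, ← mul_assoc d b d, h2]

lemma IsGroupInvOf.sq_s16 {a c : R} (h : IsGroupInvOf a c) : IsGroupInvOf (a ^ 2) (c ^ 2) := by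
  obtain ⟨h1, h2, h3⟩ := h
  have hc : Commute a c := h3
  refine ⟨?_, ?_, hc.pow_pow 2 2⟩
  · rw [← hc.mul_pow, ← ((Commute.refl a).mul_left hc.symm).mul_pow, h1]
  · rw [← hc.symm.mul_pow, ← ((Commute.refl c).mul_left hc).mul_pow, h2]

theorem fgh_relations (p q f g h : R) (hp : p * p = p) (hq : q * q = q)
    (hpq : GroupInvertible (p - q))
    (hf : f = p * gi (p - q)) (hg : g = gi (p - q) * p)
    (hh : h = gi (p - q) * (p - q)) :
    f * p = p * g ∧ p * g = p * h ∧ p * h = h * p ∧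
      q * h * q = q * h ∧ q * h = h * q ∧ h * q = h * q * h := by
  have H := isGroupInvOf_gi hpq
  have hsq := H.sq_s16
  obtain ⟨h1, h2, h3⟩ := H
  generalize gi (p - q) = c at *
  have cpa : Commute p ((p - q) ^ 2) := by
    change p * _ = _ * p
    simp only [pow_two, mul_sub, sub_mul, hp, hq, mul_assoc]
    simp only [← mul_assoc, hp]
    abel
  have cqa : Commute q ((p - q) ^ 2) := by
    change q * _ = _ * q
    simp only [pow_two, mul_sub, sub_mul, hp, hq, mul_assoc]
    simp only [← mul_assoc, hq]
    abel
  have cpc := hsq.commute cpa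
  have cqc := hsq.commute cqa
  have hhsq : h = c ^ 2 * (p - q) ^ 2 := by
    have hc : Commute c (p - q) := h3.symm
    rw [← hc.mul_pow, hh, pow_two, ← mul_assoc, h2]
  have ph : p * h = h * p := by rw [hhsq]; exact cpc.mul_right cpa
  have qh : q * h = h * q := by rw [hhsq]; exact cqc.mul_right cqa
  have hid : h * h = h := by rw [hh, ← mul_assoc, h2]
  have hca : c = (p - q) * c ^ 2 := by rw [pow_two, ← mul_assoc, h3, h2]
  have pcq : p * c * q = 0 := by
    have : p * (p - q) * q = 0 := by rw [mul_sub, sub_mul, hp, mul_assoc, hq, sub_self]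
    rw [hca, mul_assoc, mul_assoc, ← cqc.eq, ← mul_assoc, ← mul_assoc, this, zero_mul]
  refine ⟨by rw [hf, hg, mul_assoc], ?_, ph, ?_, qh, ?_⟩
  · rw [hg, hh, mul_sub, mul_sub, ← mul_assoc p c q, pcq, sub_zero]
  · rw [qh, mul_assoc, hq]
  · rw [mul_assoc, qh, ← mul_assoc, hid]
end
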